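/- Let F be a field, n a natural number, and f : A → B a homomorphism of commutative F-algebras. Let TS^n f : TS^n_F(A) → TS^n_F(B) be the restriction of the n-fold tensor power homomorphism f^{⊗n} : A^{⊗n} → B^{⊗n} to symmetric tensors. Then the kernel of TS^n f is generated as an ideal of TS^n_F(A) by the elements e_i^n(a) with 1 ≤ i ≤ n and a ∈ ker f. -/

import Mathlib

/-!
For a power series `g` over `A` put `g^{⊗n} = ∏ⱼ ιⱼ(g)`, where `ιⱼ : A → A^{⊗n}` is the `j`-th
factor inclusion. This is multiplicative in `g`, its coefficients are symmetric tensors, and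
`(1 + a X^α)^{⊗n} = ∑ᵢ e_i^n(a) X^{iα}`. A power series with constant term `1` and all other
coefficients in `ker f` is an infinite product of factors `1 + a X^α` with `a ∈ ker f`; hence,
modulo the ideal `J` generated by the `e_i^n(a)`, the series `g^{⊗n}` with `g = 1 + ⋯` depends only
on the image of `g` under `f`.

If `b` is a basis of `A`, the degree `n` coefficients of `(1 + ∑ᵢ bᵢ Xᵢ)^{⊗n}` span the symmetric
tensors. Choose a linear map `s` with `f ∘ s ∘ f = f`. Replacing each `bᵢ` by `s (f bᵢ)` does not
change the image under `f`, so `x ≡ s^{⊗n} (f^{⊗n} x)` modulo `J` for every symmetric tensor `x`,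
and the right-hand side vanishes when `x` lies in the kernel of `TS^n f`.
-/

open scoped TensorProduct
open PiTensorProduct

universe u v w

namespace SymmetricProduct

variable (F : Type u) [Field F] (A : Type v) [CommRing A] [Algebra F A] (n : ℕ)

/-- The algebra homomorphism on the `n`-fold tensor power permuting factors by `σ`. -/
noncomputable def permHom (σ : Equiv.Perm (Fin n)) :
    (⨂[F] _ : Fin n, A) →ₐ[F] (⨂[F] _ : Fin n, A) :=
  PiTensorProduct.liftAlgHom (MultilinearMap.domDomCongr σ (PiTensorProduct.tprod F))
    (by simp [MultilinearMap.domDomCongr_apply]; rfl)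
    (fun x y => by
      simp only [MultilinearMap.domDomCongr_apply]
      rw [tprod_mul_tprod]; rfl)

@[simp] lemma permHom_tprod (σ : Equiv.Perm (Fin n)) (x : Fin n → A) :
    permHom F A n σ (tprod F x) = tprod F (fun i => x (σ i)) := by
  simp [permHom]

/-- `TS^n_F(A)`: the subalgebra of symmetric tensors in the `n`-fold tensor power of `A`. -/
noncomputable def TS : Subalgebra F (⨂[F] _ : Fin n, A) where
  carrier := {x | ∀ σ : Equiv.Perm (Fin n), permHom F A n σ x = x}
  mul_mem' := fun hx hy σ => by rw [_root_.map_mul, hx σ, hy σ]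
  add_mem' := fun hx hy σ => by rw [_root_.map_add, hx σ, hy σ]
  one_mem' := fun σ => map_one _
  algebraMap_mem' := fun r σ => AlgHom.commutes _ r

/-- `e_i^n(a)`: the sum over `i`-element subsets `S` of `Fin n` of the elementary tensors
having `a` in the slots of `S` and `1` elsewhere. -/
noncomputable def esym (i : ℕ) (a : A) : ⨂[F] _ : Fin n, A :=
  ∑ S ∈ Finset.powersetCard i (Finset.univ : Finset (Fin n)),
    tprod F (fun j => if j ∈ S then a else 1)

lemma esym_mem (i : ℕ) (a : A) : esym F A n i a ∈ TS F A n := by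
  intro σ
  rw [esym, map_sum]
  simp only [permHom_tprod]
  refine Finset.sum_nbij' (fun S => S.map σ.symm.toEmbedding)
    (fun S => S.map σ.toEmbedding) ?_ ?_ ?_ ?_ ?_
  · intro S hS
    simp only [Finset.mem_powersetCard_univ, Finset.card_map] at hS ⊢
    exact hS
  · intro S hS
    simp only [Finset.mem_powersetCard_univ, Finset.card_map] at hS ⊢
    exact hS
  · intro S hS
    ext j
    simp
  · intro S hS
    ext j
    simp
  · intro S hS
    congr 1
    funext j
    have hiff : (σ j ∈ S) ↔ (j ∈ Finset.map σ.symm.toEmbedding S) := by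
      constructor
      · intro h
        exact Finset.mem_map.2 ⟨σ j, h, σ.symm_apply_apply j⟩
      · intro h
        obtain ⟨s, hs, rfl⟩ := Finset.mem_map.1 h
        simpa using hs
    simp only [hiff]

/-- `e_i^n(a)` as an element of `TS^n_F(A)`. -/
noncomputable def esymT (i : ℕ) (a : A) : TS F A n := ⟨esym F A n i a, esym_mem F A n i a⟩

lemma tprod_const_mem (a : A) : (tprod F (fun _ : Fin n => a)) ∈ TS F A n := fun σ => by
  simp

/-- `a^{⊗ n}` as an element of `TS^n_F(A)`. -/
noncomputable def tpow (a : A) : TS F A n := ⟨tprod F (fun _ : Fin n => a), tprod_const_mem F A n a⟩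


/-- The `n`-fold tensor power `f^{⊗n}` of an algebra homomorphism `f : A → B`. -/
noncomputable def mapPow {B : Type v} [CommRing B] [Algebra F B] (f : A →ₐ[F] B) :
    (⨂[F] _ : Fin n, A) →ₐ[F] (⨂[F] _ : Fin n, B) :=
  PiTensorProduct.liftAlgHom
    ((PiTensorProduct.tprod F).compLinearMap (fun _ : Fin n => f.toLinearMap))
    (by
      simp only [MultilinearMap.compLinearMap_apply, AlgHom.toLinearMap_apply, Pi.one_apply,
        _root_.map_one]
      rfl)
    (fun x y => by
      simp only [MultilinearMap.compLinearMap_apply, AlgHom.toLinearMap_apply]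
      rw [tprod_mul_tprod]
      congr 1
      funext i
      simp)

@[simp] lemma mapPow_tprod {B : Type v} [CommRing B] [Algebra F B] (f : A →ₐ[F] B)
    (x : Fin n → A) :
    mapPow F A n f (tprod F x) = tprod F (fun i => f (x i)) := by
  simp [mapPow]

lemma permHom_mapPow {B : Type v} [CommRing B] [Algebra F B] (σ : Equiv.Perm (Fin n))
    (f : A →ₐ[F] B) (x : ⨂[F] _ : Fin n, A) :
    permHom F B n σ (mapPow F A n f x) = mapPow F A n f (permHom F A n σ x) := by
  have h : (permHom F B n σ).comp (mapPow F A n f)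
      = (mapPow F A n f).comp (permHom F A n σ) := by
    ext i a
    simp [PiTensorProduct.singleAlgHom_apply]
  exact DFunLike.congr_fun h x

/-- `TS^n f` : the restriction of `f^{⊗n}` to symmetric tensors. -/
noncomputable def TSmap {B : Type v} [CommRing B] [Algebra F B] (f : A →ₐ[F] B) :
    TS F A n →ₐ[F] TS F B n :=
  AlgHom.codRestrict ((mapPow F A n f).comp (TS F A n).val) (TS F B n)
    (fun x σ => by
      simp only [AlgHom.comp_apply, Subalgebra.coe_val]
      rw [permHom_mapPow, x.2 σ])

section OneUnits

open MvPowerSeries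

variable {σ R S T : Type*} [CommRing R] [Ring S] [CommSemiring T]

/-- A map of power series compatible with truncation: the coefficient of its value at `m` depends
only on the coefficients of its argument at exponents `≤ m`. This is what continuity has to provide
for infinite products to be evaluated factor by factor. -/
def TruncCompatible (Φ : MvPowerSeries σ R → MvPowerSeries σ T) : Prop :=
  ∀ m g h, (∀ α ≤ m, coeff α g = coeff α h) → coeff m (Φ g) = coeff m (Φ h)

lemma exists_one_add_eq_one_add_monomial_mul (f : R →+* S) {u : MvPowerSeries σ R}
    (hu : map f u = 0) {α : σ →₀ ℕ} (hα : α ≠ 0) :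
    ∃ w : MvPowerSeries σ R, 1 + u = (1 + monomial α (coeff α u)) * (1 + w) ∧ map f w = 0 ∧
      ∀ β, (∀ γ ≤ β, γ ≠ α → coeff γ u = 0) → coeff β w = 0 := by
  classical
  set t := monomial α (coeff α u)
  have hunit : IsUnit (1 + t) := by
    have ht0 : constantCoeff t = 0 := coeff_monomial_ne hα.symm _
    simp [isUnit_iff_constantCoeff, ht0]
  obtain ⟨v, hv⟩ := hunit.exists_right_inv
  refine ⟨v * (u - t), by linear_combination -(u - t) * hv, ?_, fun β hβ => ?_⟩
  · have hut : f (coeff α u) = 0 := by simpa using congr(coeff α $hu)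
    simp [t, hu, hut]
  · rw [coeff_mul]
    refine Finset.sum_eq_zero fun γ hγ => ?_
    have hle : γ.2 ≤ β := by
      simp [← Finset.HasAntidiagonal.mem_antidiagonal.1 hγ]
    have hzero : coeff γ.2 (u - t) = 0 := by
      rcases eq_or_ne γ.2 α with h | h
      · simp [h, t]
      · simp [t, hβ _ hle h, coeff_monomial_ne h]
    rw [hzero, mul_zero]

namespace TruncCompatible

variable (f : R →+* S) {Φ : MvPowerSeries σ R →* MvPowerSeries σ T}

-- Splitting off the factor `1 + a X^α` for a minimal `α ∈ U` allows induction on `U`.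
lemma coeff_map_one_add (hΦ : TruncCompatible Φ)
    (hmon : ∀ α a, f a = 0 → Φ (1 + monomial α a) = 1)
    (m : σ →₀ ℕ) (U : Finset (σ →₀ ℕ)) (h0 : 0 ∉ U)
    (hU : ∀ α ∈ U, ∀ β ≤ m, α ≤ β → β ∈ U) :
    ∀ u, map f u = 0 → (∀ β ≤ m, β ∉ U → coeff β u = 0) →
      coeff m (Φ (1 + u)) = coeff m 1 := by
  classical
  induction U using Finset.strongInduction with
  | H U ih =>
    intro u hu hsupp
    rcases U.eq_empty_or_nonempty with rfl | hne
    · rw [← map_one Φ]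
      exact hΦ m _ _ fun β hβ => by simp [hsupp β hβ]
    · obtain ⟨α, hα⟩ := U.exists_minimal hne
      have hα0 : α ≠ 0 := fun h => h0 (h ▸ hα.prop)
      obtain ⟨w, hw, hwf, hw0⟩ := exists_one_add_eq_one_add_monomial_mul f hu hα0
      have hfα : f (coeff α u) = 0 := by simpa using congr(coeff α $hu)
      rw [hw, map_mul, hmon α _ hfα, one_mul]
      refine ih _ (Finset.erase_ssubset hα.prop) (fun h => h0 (Finset.mem_of_mem_erase h)) ?_
        w hwf ?_
      · intro γ hγ β hβ hγβ
        obtain ⟨hγα, hγU⟩ := Finset.mem_erase.1 hγ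
        refine Finset.mem_erase.2 ⟨?_, hU γ hγU β hβ hγβ⟩
        rintro rfl
        exact hγα (hα.eq_of_le hγU hγβ)
      · intro β hβ hβU
        refine hw0 β fun γ hγβ hγα => hsupp γ (hγβ.trans hβ) fun hγU => ?_
        have hβα : β = α := by
          by_contra h
          exact hβU (Finset.mem_erase.2 ⟨h, hU γ hγU β hβ hγβ⟩)
        exact hγα (hα.eq_of_le hγU (hγβ.trans hβα.le))

theorem map_one_add_eq_one (hΦ : TruncCompatible Φ)
    (hmon : ∀ α a, f a = 0 → Φ (1 + monomial α a) = 1)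
    {u : MvPowerSeries σ R} (hu0 : constantCoeff u = 0) (hu : map f u = 0) : Φ (1 + u) = 1 := by
  classical
  ext m
  refine coeff_map_one_add f hΦ hmon m ((Finset.Iic m).erase 0) (by simp) ?_ u hu ?_
  · intro α hα β hβ hαβ
    have hα0 : α ≠ 0 := Finset.ne_of_mem_erase hα
    exact Finset.mem_erase.2 ⟨fun h => hα0 (le_zero_iff.1 (h ▸ hαβ)), Finset.mem_Iic.2 hβ⟩
  · intro β hβ hβU
    obtain rfl : β = 0 := by simpa [hβ] using hβU
    exact hu0

theorem eq_of_map_eq (hΦ : TruncCompatible Φ)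
    (hmon : ∀ α a, f a = 0 → Φ (1 + monomial α a) = 1)
    {g h : MvPowerSeries σ R} (hg : constantCoeff g = 1) (hh : constantCoeff h = 1)
    (hgh : map f g = map f h) : Φ g = Φ h := by
  obtain ⟨v, hv⟩ := (isUnit_iff_constantCoeff.2 (hh ▸ isUnit_one)).exists_right_inv
  have hfac : g = h * (1 + v * (g - h)) := by linear_combination (g - h) * -hv
  rw [hfac, map_mul, map_one_add_eq_one f hΦ hmon, mul_one]
  · simp [hg, hh]
  · simp [hgh]

end TruncCompatible

end OneUnits

section TensorPower

open MvPowerSeries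

variable (R : Type*) {S σ κ : Type*} [CommSemiring R] [CommSemiring S] [Algebra R S]
  [DecidableEq κ]

lemma prod_singleAlgHom (s : Finset κ) (a : κ → S) :
    ∏ j ∈ s, singleAlgHom (R := R) (A := fun _ : κ => S) j (a j) =
      tprod R (fun j => if j ∈ s then a j else 1) := by
  simp only [singleAlgHom_apply, ← tprod_prod]
  congr 1
  ext j
  simp [Finset.prod_apply, Pi.mulSingle_apply]

variable [Fintype κ]

variable (κ) in
/-- The tensor power `g^{⊗κ}` of a power series `g`: the product over `j : κ` of the images of `g`
under the inclusions of the `j`-th tensor factor. -/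
noncomputable def tensorPowSeries : MvPowerSeries σ S →* MvPowerSeries σ (⨂[R] _ : κ, S) :=
  ∏ j : κ, (MvPowerSeries.map (singleAlgHom (R := R) (A := fun _ : κ => S) j).toRingHom).toMonoidHom

lemma tensorPowSeries_apply (g : MvPowerSeries σ S) :
    tensorPowSeries R κ g =
      ∏ j, MvPowerSeries.map (singleAlgHom (R := R) (A := fun _ : κ => S) j).toRingHom g := by
  simp [tensorPowSeries]

lemma coeff_tensorPowSeries_congr {m : σ →₀ ℕ} {g h : MvPowerSeries σ S}
    (hgh : ∀ α ≤ m, coeff α g = coeff α h) :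
    coeff m (tensorPowSeries R κ g) = coeff m (tensorPowSeries R κ h) := by
  classical
  simp only [tensorPowSeries_apply, coeff_prod, coeff_map]
  refine Finset.sum_congr rfl fun l hl => Finset.prod_congr rfl fun j _ => ?_
  have hlm : l j ≤ m := by
    rw [← (Finset.mem_finsuppAntidiag.1 hl).1]
    exact Finset.single_le_sum (fun _ _ => zero_le) (Finset.mem_univ j)
  rw [hgh _ hlm]

lemma tensorPowSeries_sum_monomial {ι : Type*} (s : Finset ι) (e : ι → σ →₀ ℕ) (v : ι → S) :
    tensorPowSeries R κ (∑ i ∈ s, monomial (e i) (v i)) =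
      ∑ p ∈ Fintype.piFinset fun _ : κ => s, monomial (∑ j, e (p j)) (tprod R (v ∘ p)) := by
  simp only [tensorPowSeries_apply, map_sum, map_monomial, Finset.prod_univ_sum, prod_monomial]
  refine Finset.sum_congr rfl fun p _ => ?_
  congr 1
  simpa [Function.comp_def] using prod_singleAlgHom R Finset.univ (v ∘ p)

lemma tensorPowSeries_one_add_monomial (α : σ →₀ ℕ) (a : S) :
    tensorPowSeries R κ (1 + monomial α a) =
      ∑ s : Finset κ, monomial (s.card • α) (tprod R fun j => if j ∈ s then a else 1) := by
  simp only [tensorPowSeries_apply, map_add, map_one, map_monomial, Finset.prod_one_add,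
    Finset.powerset_univ, prod_monomial, Finset.sum_const]
  refine Finset.sum_congr rfl fun s _ => ?_
  congr 1
  exact prod_singleAlgHom R s fun _ => a

end TensorPower

section Content

variable {κ ι : Type*} [Fintype κ]

/-- The content of a word `p : κ → ι`: the number of occurrences of each letter. -/
noncomputable def content (p : κ → ι) : ι →₀ ℕ := ∑ j, Finsupp.single (p j) 1

lemma degree_content (p : κ → ι) : (content p).degree = Fintype.card κ := by
  simp [content]

lemma content_apply (p : κ → ι) (i : ι) : content p i = Nat.card {j // p j = i} := by
  classical
  simp [content, Finsupp.finsetSum_apply, Finsupp.single_apply, Fintype.card_subtype]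

lemma exists_perm_of_content_eq {p q : κ → ι} (h : content p = content q) :
    ∃ σ : Equiv.Perm κ, p = q ∘ σ := by
  classical
  have hfib (i : ι) : Nonempty ({j // p j = i} ≃ {j // q j = i}) :=
    Finite.card_eq.1 (by rw [← content_apply, ← content_apply, h])
  exact ⟨.ofFiberEquiv fun i => (hfib i).some,
    funext fun j => (Equiv.ofFiberEquiv_map (fun i => (hfib i).some) j).symm⟩

lemma exists_eq_some_comp_of_degree_eq {p : κ → Option ι}
    (h : (∑ j, (p j).elim 0 (Finsupp.single · 1)).degree = Fintype.card κ) :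
    ∃ q : κ → ι, p = some ∘ q := by
  have hle : ∀ o : Option ι, (o.elim 0 (Finsupp.single · 1) : ι →₀ ℕ).degree ≤ 1 := by
    rintro (_ | i) <;> simp
  have hone := (Finset.sum_eq_sum_iff_of_le fun j (_ : j ∈ Finset.univ) => hle (p j)).1
    (by simpa using h)
  have hsome : ∀ j, ∃ i, p j = some i := fun j => by
    rw [← Option.ne_none_iff_exists']
    intro hj
    simpa [hj] using hone j (Finset.mem_univ j)
  choose q hq using hsome
  exact ⟨q, funext hq⟩

end Content

section MonomialSymm

variable (R : Type*) {κ ι : Type*} [CommSemiring R] [Fintype κ] [DecidableEq κ]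

open scoped Classical in
/-- The monomial symmetric tensor in the vectors `v i`, `i ∈ s`, with exponent `m`: the sum of the
distinct elementary tensors in which each `v i` fills `m i` of the factors. It is zero if `m` is
not supported on `s` or is not of degree `Fintype.card κ`. -/
noncomputable def monomialSymm {M : Type*} [AddCommMonoid M] [Module R M] (v : ι → M)
    (s : Finset ι) (m : ι →₀ ℕ) : ⨂[R] _ : κ, M :=
  ∑ p ∈ Fintype.piFinset fun _ : κ => s with content p = m, tprod R (v ∘ p)

lemma map_monomialSymm {M N : Type*} [AddCommMonoid M] [Module R M] [AddCommMonoid N] [Module R N]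
    (q : M →ₗ[R] N) (v : ι → M) (s : Finset ι) (m : ι →₀ ℕ) :
    PiTensorProduct.map (fun _ : κ => q) (monomialSymm R v s m) = monomialSymm R (q ∘ v) s m := by
  simp only [monomialSymm, map_sum, map_tprod]
  rfl

open MvPowerSeries in
lemma coeff_tensorPowSeries_one_add_sum {S : Type*} [CommSemiring S] [Algebra R S] (v : ι → S)
    (s : Finset ι) {m : ι →₀ ℕ} (hm : m.degree = Fintype.card κ) :
    coeff m (tensorPowSeries R κ (1 + ∑ i ∈ s, monomial (Finsupp.single i 1) (v i))) =
      monomialSymm R v s m := by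
  classical
  -- Treat the summand `1` as a further letter `none`; it cannot occur in degree `card κ`.
  let e : Option ι → ι →₀ ℕ := fun o => o.elim 0 (Finsupp.single · 1)
  let w : Option ι → S := fun o => o.elim 1 v
  have hsum : 1 + ∑ i ∈ s, monomial (Finsupp.single i 1) (v i) =
      ∑ o ∈ s.insertNone, monomial (e o) (w o) := by
    simp [Finset.sum_insertNone, e, w]
  rw [hsum, tensorPowSeries_sum_monomial, map_sum, monomialSymm]
  simp only [coeff_monomial, eq_comm (a := m)]
  rw [← Finset.sum_filter]
  refine .symm <| Finset.sum_nbij (some ∘ ·) (fun q hq => ?_)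
    (Option.some_injective ι).comp_left.injOn (fun p hp => ?_) fun _ _ => rfl
  · rw [Finset.mem_filter] at hq ⊢
    simpa [e, content] using hq
  · rw [Finset.mem_coe, Finset.mem_filter] at hp
    have hdeg : (∑ j, e (p j)).degree = Fintype.card κ := by rw [hp.2, hm]
    obtain ⟨q, rfl⟩ := exists_eq_some_comp_of_degree_eq hdeg
    refine ⟨q, ?_, rfl⟩
    rw [Finset.mem_coe, Finset.mem_filter]
    simpa [e, content] using hp

end MonomialSymm

section SymmetricTensors

variable {A n}

lemma piTensorProduct_repr_comp_perm {ι : Type*} (b : Module.Basis ι F A) {x : ⨂[F] _ : Fin n, A}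
    (hx : x ∈ TS F A n) (p : Fin n → ι) (σ : Equiv.Perm (Fin n)) :
    (Basis.piTensorProduct fun _ => b).repr x (p ∘ σ) =
      (Basis.piTensorProduct fun _ => b).repr x p := by
  set bb := Basis.piTensorProduct fun _ : Fin n => b
  have h : bb.coord (p ∘ σ) ∘ₗ (permHom F A n σ).toLinearMap = bb.coord p := by
    ext y
    simpa [bb] using Equiv.prod_comp σ fun j => b.repr (y j) (p j)
  simpa [hx σ] using congr($h x)

lemma mem_span_monomialSymm {ι : Type*} (b : Module.Basis ι F A) {x : ⨂[F] _ : Fin n, A}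
    (hx : x ∈ TS F A n) :
    x ∈ Submodule.span F {y | ∃ s m, m.degree = n ∧ y = monomialSymm F b s m} := by
  classical
  let bb := Basis.piTensorProduct fun _ : Fin n => b
  let c := bb.repr x
  let s := c.support.biUnion fun p => Finset.univ.image p
  have hsub : c.support ⊆ Fintype.piFinset fun _ => s := fun p hp =>
    Fintype.mem_piFinset.2 fun j => Finset.mem_biUnion.2 ⟨p, hp, by simp⟩
  have hexp : x = ∑ p ∈ Fintype.piFinset fun _ => s, c p • tprod F (b ∘ p) := by
    conv_lhs => rw [← bb.linearCombination_repr x]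
    rw [Finsupp.linearCombination_apply, Finsupp.sum_of_support_subset _ hsub _ (by simp)]
    simp [bb, c, Function.comp_def]
  rw [hexp, ← Finset.sum_fiberwise_of_maps_to (g := content)
    fun p hp => Finset.mem_image_of_mem content hp]
  refine Submodule.sum_mem _ fun m hm => ?_
  obtain ⟨q, -, rfl⟩ := Finset.mem_image.1 hm
  have hconst : ∑ p ∈ Fintype.piFinset fun _ => s with content p = content q,
      c p • tprod F (b ∘ p) = c q • monomialSymm F b s (content q) := by
    rw [monomialSymm, Finset.smul_sum]
    refine Finset.sum_congr (by congr) fun p hp => ?_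
    obtain ⟨σ, rfl⟩ := exists_perm_of_content_eq (Finset.mem_filter.1 hp).2
    rw [show c (q ∘ σ) = c q from piTensorProduct_repr_comp_perm F b hx q σ]
  rw [hconst]
  exact Submodule.smul_mem _ _ (Submodule.subset_span ⟨s, _, by simp [degree_content], rfl⟩)

end SymmetricTensors

section SymmetricPowerSeries

open MvPowerSeries

variable {A n} {σ : Type*}

lemma permHom_comp_singleAlgHom (τ : Equiv.Perm (Fin n)) (j : Fin n) :
    (permHom F A n τ).comp (singleAlgHom (R := F) (A := fun _ : Fin n => A) j) =
      singleAlgHom (R := F) (A := fun _ : Fin n => A) (τ.symm j) := by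
  ext a
  simp only [AlgHom.comp_apply, singleAlgHom_apply, permHom_tprod]
  congr 1
  ext i
  simp [Pi.mulSingle_apply, Equiv.eq_symm_apply]

lemma map_permHom_tensorPowSeries (τ : Equiv.Perm (Fin n)) (g : MvPowerSeries σ A) :
    MvPowerSeries.map (permHom F A n τ).toRingHom (tensorPowSeries F (Fin n) g) =
      tensorPowSeries F (Fin n) g := by
  simp only [tensorPowSeries_apply, map_prod, MvPowerSeries.map_map]
  rw [← Equiv.prod_comp τ]
  refine Finset.prod_congr rfl fun j _ => ?_
  congr 2
  ext a
  simpa using congr($(permHom_comp_singleAlgHom F τ (τ j)) a)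

lemma coeff_tensorPowSeries_mem (g : MvPowerSeries σ A) (m : σ →₀ ℕ) :
    coeff m (tensorPowSeries F (Fin n) g) ∈ TS F A n := fun τ => by
  simpa using congr(coeff m $(map_permHom_tensorPowSeries F τ g))

lemma mvPowerSeries_map_injective {R S : Type*} [Semiring R] [Semiring S] {φ : R →+* S}
    (hφ : Function.Injective φ) : Function.Injective (MvPowerSeries.map (σ := σ) φ) :=
  fun g h hgh => MvPowerSeries.ext fun m => hφ (by simpa using congr(coeff m $hgh))

lemma map_val_injective :
    Function.Injective (MvPowerSeries.map (σ := σ) (TS F A n).val.toRingHom) :=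
  mvPowerSeries_map_injective Subtype.val_injective

variable (A n) in
/-- The tensor power `g^{⊗n}` of a power series `g`, viewed as a power series over the ring of
symmetric tensors. -/
noncomputable def symPowSeries : MvPowerSeries σ A →* MvPowerSeries σ (TS F A n) where
  toFun g m := ⟨coeff m (tensorPowSeries F (Fin n) g), coeff_tensorPowSeries_mem F g m⟩
  map_one' := map_val_injective F <|
    (map_one (tensorPowSeries F (Fin n))).trans (map_one (MvPowerSeries.map _)).symm
  map_mul' g h := map_val_injective F <| by
    refine .trans ?_ (map_mul (MvPowerSeries.map (TS F A n).val.toRingHom) _ _).symm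
    exact map_mul (tensorPowSeries F (Fin n)) g h

lemma coe_coeff_symPowSeries (g : MvPowerSeries σ A) (m : σ →₀ ℕ) :
    ((coeff m (symPowSeries F A n g) : TS F A n) : ⨂[F] _ : Fin n, A) =
      coeff m (tensorPowSeries F (Fin n) g) := rfl

lemma map_val_symPowSeries (g : MvPowerSeries σ A) :
    MvPowerSeries.map (TS F A n).val.toRingHom (symPowSeries F A n g) =
      tensorPowSeries F (Fin n) g := rfl

lemma symPowSeries_one_add_monomial (α : σ →₀ ℕ) (a : A) :
    symPowSeries F A n (1 + monomial α a) =
      ∑ i ∈ Finset.range (n + 1), monomial (i • α) (esymT F A n i a) := by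
  refine map_val_injective F ?_
  rw [map_val_symPowSeries, tensorPowSeries_one_add_monomial, ← Finset.powerset_univ,
    Finset.sum_powerset, Finset.card_fin, map_sum]
  refine Finset.sum_congr rfl fun i _ => ?_
  rw [map_monomial]
  change _ = monomial (i • α) (esym F A n i a)
  rw [esym, map_sum]
  refine Finset.sum_congr rfl fun S hS => ?_
  rw [(Finset.mem_powersetCard.1 hS).2]

end SymmetricPowerSeries

section Congruence

open MvPowerSeries

variable {A} {B : Type v} [CommRing B] [Algebra F B] (f : A →ₐ[F] B) {σ : Type*}

/-- The ideal of `TS^n_F(A)` generated by the elements `e_i^n(a)` with `1 ≤ i ≤ n` and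
`a ∈ ker f`. -/
noncomputable def esymIdeal : Ideal (TS F A n) :=
  Ideal.span {x : TS F A n | ∃ (i : ℕ) (a : A), 1 ≤ i ∧ i ≤ n ∧ f a = 0 ∧ x = esymT F A n i a}

lemma esymT_zero (a : A) : esymT F A n 0 a = 1 :=
  Subtype.ext (by simp [esymT, esym]; rfl)

/-- The tensor power `g^{⊗n}` of a power series `g`, with coefficients taken modulo
`esymIdeal F n f`. -/
noncomputable def symPowSeriesMod :
    MvPowerSeries σ A →* MvPowerSeries σ (TS F A n ⧸ esymIdeal F n f) :=
  (MvPowerSeries.map (Ideal.Quotient.mk (esymIdeal F n f))).toMonoidHom.comp (symPowSeries F A n)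

lemma truncCompatible_symPowSeriesMod :
    TruncCompatible (symPowSeriesMod F n f (σ := σ)) := fun _ _ _ hgh =>
  congrArg (Ideal.Quotient.mk (esymIdeal F n f))
    (Subtype.ext (coeff_tensorPowSeries_congr F hgh))

lemma symPowSeriesMod_one_add_monomial (α : σ →₀ ℕ) {a : A} (ha : f a = 0) :
    symPowSeriesMod F n f (1 + monomial α a) = 1 := by
  have hmem : ∀ i < n, esymT F A n (i + 1) a ∈ esymIdeal F n f := fun i hi =>
    Ideal.subset_span ⟨i + 1, a, by omega, by omega, ha, rfl⟩
  have hsum : ∑ i ∈ Finset.range n, monomial ((i + 1) • α)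
      (Ideal.Quotient.mk (esymIdeal F n f) (esymT F A n (i + 1) a)) = 0 :=
    Finset.sum_eq_zero fun i hi => by
      rw [Ideal.Quotient.eq_zero_iff_mem.2 (hmem i (Finset.mem_range.1 hi)), map_zero]
  simp [symPowSeriesMod, symPowSeries_one_add_monomial, Finset.sum_range_succ', esymT_zero, hsum]

variable {F n f}

lemma coeff_symPowSeries_sub_mem_esymIdeal {g h : MvPowerSeries σ A} (hg : constantCoeff g = 1)
    (hh : constantCoeff h = 1)
    (hgh : MvPowerSeries.map f.toRingHom g = MvPowerSeries.map f.toRingHom h) (m : σ →₀ ℕ) :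
    coeff m (symPowSeries F A n g) - coeff m (symPowSeries F A n h) ∈ esymIdeal F n f := by
  have heq := (truncCompatible_symPowSeriesMod F n f).eq_of_map_eq f.toRingHom
    (fun α _ ha => symPowSeriesMod_one_add_monomial F n f α ha) hg hh hgh
  exact Ideal.Quotient.eq.1 congr(coeff m $heq)

lemma exists_mem_esymIdeal_coe_eq_sub_map {p : A →ₗ[F] A} (hp : ∀ a, f (p a) = f a)
    {x : ⨂[F] _ : Fin n, A} (hx : x ∈ TS F A n) :
    ∃ y ∈ esymIdeal F n f,
      (y : ⨂[F] _ : Fin n, A) = x - PiTensorProduct.map (fun _ => p) x := by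
  let b := Module.Basis.ofVectorSpace F A
  let J := ((esymIdeal F n f).restrictScalars F).map (TS F A n).val.toLinearMap
  suffices hspan : Submodule.span F {y | ∃ s m, m.degree = n ∧ y = monomialSymm F b s m} ≤
      J.comap (LinearMap.id - PiTensorProduct.map fun _ => p) from
    hspan (mem_span_monomialSymm F b hx)
  rw [Submodule.span_le]
  rintro _ ⟨s, m, hm, rfl⟩
  let gen (v : Module.Basis.ofVectorSpaceIndex F A → A) :=
    1 + ∑ i ∈ s, monomial (Finsupp.single i 1) (v i)
  have hgen v : constantCoeff (gen v) = 1 := by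
    have hmon (i) : constantCoeff (monomial (Finsupp.single i 1) (v i)) = 0 :=
      coeff_monomial_ne (Finsupp.single_ne_zero.2 one_ne_zero).symm _
    simp [gen, hmon]
  have hmap : MvPowerSeries.map f.toRingHom (gen b) =
      MvPowerSeries.map f.toRingHom (gen (p ∘ b)) := by simp [gen, hp]
  refine ⟨_, coeff_symPowSeries_sub_mem_esymIdeal (hgen b) (hgen (p ∘ b)) hmap m, ?_⟩
  simp [map_monomialSymm, coe_coeff_symPowSeries, gen, coeff_tensorPowSeries_one_add_sum, hm,
    Function.comp_def]

end Congruence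

section Kernel

lemma exists_comp_comp_eq_self {K V W : Type*} [DivisionRing K] [AddCommGroup V] [Module K V]
    [AddCommGroup W] [Module K W] (f : V →ₗ[K] W) : ∃ s : W →ₗ[K] V, f ∘ₗ s ∘ₗ f = f := by
  obtain ⟨t, ht⟩ := f.rangeRestrict.exists_rightInverse_of_surjective f.range_rangeRestrict
  obtain ⟨s, hs⟩ := t.exists_extend
  refine ⟨s, LinearMap.ext fun v => ?_⟩
  have hsv : s (f v) = t (f.rangeRestrict v) := congr($hs (f.rangeRestrict v))
  simpa [hsv] using congr((($ht (f.rangeRestrict v) : LinearMap.range f) : W))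

variable {A} {B : Type v} [CommRing B] [Algebra F B] (f : A →ₐ[F] B)

lemma toLinearMap_mapPow :
    (mapPow F A n f).toLinearMap = PiTensorProduct.map fun _ => f.toLinearMap := by
  ext a
  simp

lemma esymIdeal_le_ker_TSmap : esymIdeal F n f ≤ RingHom.ker (TSmap F A n f) := by
  rw [esymIdeal, Ideal.span_le]
  rintro _ ⟨i, a, hi, -, ha, rfl⟩
  refine Subtype.ext ?_
  change mapPow F A n f (esym F A n i a) = 0
  rw [esym, map_sum]
  refine Finset.sum_eq_zero fun S hS => ?_
  obtain ⟨j, hj⟩ : S.Nonempty := Finset.card_pos.1 ((Finset.mem_powersetCard_univ.1 hS).symm ▸ hi)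
  rw [mapPow_tprod]
  exact MultilinearMap.map_coord_zero _ j (by simp [hj, ha])

lemma ker_TSmap_le_esymIdeal : RingHom.ker (TSmap F A n f) ≤ esymIdeal F n f := by
  intro x hx
  obtain ⟨s, hs⟩ := exists_comp_comp_eq_self f.toLinearMap
  obtain ⟨y, hy, hyx⟩ := exists_mem_esymIdeal_coe_eq_sub_map (f := f) (p := s ∘ₗ f.toLinearMap)
    (fun a => congr($hs a)) x.2
  have hfx : PiTensorProduct.map (fun _ => f.toLinearMap) (x : ⨂[F] _ : Fin n, A) = 0 := by
    rw [← toLinearMap_mapPow]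
    exact congrArg Subtype.val hx
  rw [PiTensorProduct.map_comp, LinearMap.comp_apply, hfx, map_zero, sub_zero] at hyx
  exact Subtype.ext hyx ▸ hy

end Kernel

/-- **Kernel of `TS^n f`.** For a homomorphism `f : A → B` of commutative algebras over a
field `F`, the kernel of `TS^n f : TS^n_F(A) → TS^n_F(B)` (the restriction of `f^{⊗n}` to
symmetric tensors) is generated as an ideal by the elements `e_i^n(a)` with `1 ≤ i ≤ n` and
`a ∈ ker f`. -/
theorem ker_TSmap_eq_span_esym (B : Type v) [CommRing B] [Algebra F B] (f : A →ₐ[F] B) :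
    RingHom.ker (TSmap F A n (B := B) f) =
      Ideal.span {x : TS F A n | ∃ (i : ℕ) (a : A),
        1 ≤ i ∧ i ≤ n ∧ f a = 0 ∧ x = esymT F A n i a} := by
  exact le_antisymm (ker_TSmap_le_esymIdeal F n f) (esymIdeal_le_ker_TSmap F n f)

end SymmetricProduct
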